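/- Let q be an odd prime power, n > 1, r > 1, let α_1, …, α_r ∈ F_q[x] be distinct with deg α_j < n, and fix an index i. Let B = {a ∈ F_q^{n−1} : there exists j ≠ i such that D_{f_a+α_i}(t) and D_{f_a+α_j}(t) have a common root in an algebraic closure of F_q}. Then #B ≤ 3(r−1)n²·q^{n−2}. -/

import Mathlib

/-! The polynomial `g + ρ` has discriminant zero exactly when `-ρ` is a critical value of `g`, so for
each `j ≠ i` one has to bound the number of `a` for which `f_a + α_i` and `f_a + α_j` share a
critical value. The union over the `r - 1` indices `j` then gives the factor `r - 1`.

Fix `j` and cut `F ^ (n-1)` into lines along the coordinate `a_1 = s`. On one line the two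
polynomials are `g₁ + s X` and `g₂ + s X` with `g₁ ≠ g₂` fixed. A critical point `c` of `g + s X`
satisfies `g'(c) + s = 0`, and its critical value is `g(c) - c g'(c)`. Hence
`sliceDisc n g = Res_x (g' + s, g - x g' + t)`, a polynomial in `s` and `t`, vanishes at `(s, ρ)` if
and only if `-ρ` is a critical value of `g + s X`. A common critical value therefore forces
`R(s) = 0`, where `R = sliceRes n g₁ g₂` is the resultant in `t` of the two slice discriminants;
degree counting gives `deg R ≤ 2 (n-1) n`.

The heart of the proof is that `R ≠ 0` whenever `g₁'' ≠ 0` and `g₂'' ≠ 0`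
(`eq_of_common_critical_value`, `sliceRes_ne_zero`). Otherwise there are critical points `c₁`, `c₂`
of `g₁ + s X`, `g₂ + s X` with a common value `v` over the algebraic closure of `F(s)`. They are
transcendental over `F`, hence simple roots of `g_k' + s` and separable over `F(s)`. Differentiating
`v = g_k(c_k) - c_k g_k'(c_k)` gives `dv = -c_k d(g_k'(c_k)) = c_k ds`, and `ds ≠ 0` in the Kähler
differentials of a separable extension of `F(s)` over `F`; so `c₁ = c₂`. Then `g₁ - g₂` vanishes at
an element transcendental over `F`, which contradicts `g₁ ≠ g₂`.

Since the characteristic is odd, `g_k'' = 0` forces the coefficient of `X ^ 2` in `g_k` to vanish,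
which costs at most `2 q ^ (n-2)` vectors `a`. The bound for one `j` is therefore
`(2 n (n-1) + 2) q ^ (n-2) ≤ 3 n ^ 2 q ^ (n-2)`. -/

open Polynomial

noncomputable section
open scoped Classical

/-- The Sylvester matrix of `P` and `Q` with respect to formal degrees `m` and `n`. -/
def sylvesterMatrix {R : Type*} [CommRing R] (m n : ℕ) (P Q : Polynomial R) :
    Matrix (Fin (n + m)) (Fin (n + m)) R :=
  Matrix.of fun i j =>
    if (i : ℕ) < n then
      (if (i : ℕ) ≤ (j : ℕ) ∧ (j : ℕ) ≤ (i : ℕ) + m then P.coeff (m + i - j) else 0)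
    else
      (if (i : ℕ) - n ≤ (j : ℕ) ∧ (j : ℕ) ≤ (i : ℕ) then Q.coeff ((i : ℕ) - j) else 0)

/-- The resultant of `P` and `Q` with respect to formal degrees `m` and `n`:
the determinant of the `(m+n) × (m+n)` Sylvester matrix. -/
def presultant {R : Type*} [CommRing R] (m n : ℕ) (P Q : Polynomial R) : R :=
  (sylvesterMatrix m n P Q).det

/-- The discriminant of a polynomial `P` of degree `m`; for monic `P` this agrees with the
standard discriminant `∏_{i<j} (r_i - r_j)²` over the roots of `P` in an algebraic closure. -/
def pdisc {R : Type*} [CommRing R] (P : Polynomial R) : R :=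
  (-1) ^ (P.natDegree * (P.natDegree - 1) / 2) *
    presultant P.natDegree (P.natDegree - 1) P (Polynomial.derivative P)

/-- `Dpoly g` is `D_g(t) = disc_x (g(x) + t)`, a polynomial in `t`. -/
def Dpoly {R : Type*} [CommRing R] (g : Polynomial R) : Polynomial R :=
  pdisc (g.map Polynomial.C + Polynomial.C Polynomial.X)

/-- `fPoly n a = x^n + a_{n-1} x^{n-1} + ... + a_1 x`. -/
def fPoly {R : Type*} [CommRing R] (n : ℕ) (a : Fin (n - 1) → R) : Polynomial R :=
  X ^ n + ∑ i : Fin (n - 1), Polynomial.C (a i) * X ^ ((i : ℕ) + 1)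

/-! ### Discriminants and critical values -/

/-- The determinant defining `presultant` is that of Mathlib's Sylvester matrix after transposing and
reversing the order of both rows and columns. -/
theorem presultant_eq_resultant {R : Type*} [CommRing R] (m n : ℕ) (P Q : R[X]) :
    presultant m n P Q = resultant P Q m n := by
  let e : Fin (n + m) ≃ Fin (m + n) := (finCongr (add_comm n m)).trans Fin.revPerm
  have h : sylvesterMatrix m n P Q = (sylvester P Q m n).transpose.submatrix e e := by
    ext i j
    have he : ∀ k : Fin (n + m), (e k : ℕ) = m + n - (k + 1) := fun k => by simp [e]
    have hi := i.2
    have hj := j.2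
    simp only [Matrix.submatrix_apply, Matrix.transpose_apply, sylvesterMatrix, Matrix.of_apply,
      sylvester]
    generalize hi' : e i = i'
    have hi2 := he i
    rw [hi'] at hi2
    induction i' using Fin.addCases with
    | left k =>
      have hk := k.2
      simp only [Fin.val_castAdd] at hi2
      simp only [Fin.addCases_left, he, Set.mem_Icc]
      rw [if_neg (by omega)]
      refine ite_congr (by rw [eq_iff_iff]; omega) (fun _ => ?_) (fun _ => rfl)
      congr 1; omega
    | right k =>
      have hk := k.2
      simp only [Fin.val_natAdd] at hi2
      simp only [Fin.addCases_right, he, Set.mem_Icc]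
      rw [if_pos (by omega)]
      refine ite_congr (by rw [eq_iff_iff]; omega) (fun _ => ?_) (fun _ => rfl)
      congr 1; omega
  rw [presultant, h, Matrix.det_submatrix_equiv_self, Matrix.det_transpose, resultant]

theorem exists_common_root_of_not_isCoprime {K : Type*} [Field K] [IsAlgClosed K] {P Q : K[X]}
    (h : ¬ IsCoprime P Q) : ∃ c, P.eval c = 0 ∧ Q.eval c = 0 := by
  by_contra! hc
  refine h ((isCoprime_iff_aeval_ne_zero_of_isAlgClosed K K P Q).2 fun c => ?_)
  simp only [coe_aeval_eq_eval]
  by_cases h0 : P.eval c = 0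
  · exact Or.inr (hc c h0)
  · exact Or.inl h0

/-- The degree `n` used for `Q` may exceed its true degree: this only multiplies the resultant by a
power of the leading coefficient of `P`. -/
theorem exists_common_root_of_resultant_eq_zero {K : Type*} [Field K] [IsAlgClosed K]
    {P Q : K[X]} {n : ℕ} (hP : P ≠ 0) (hQ : Q.natDegree ≤ n)
    (h : resultant P Q P.natDegree n = 0) : ∃ c, P.eval c = 0 ∧ Q.eval c = 0 := by
  obtain ⟨k, rfl⟩ := Nat.exists_eq_add_of_le hQ
  rw [resultant_add_right_deg _ _ _ _ _ le_rfl, coeff_natDegree, mul_eq_zero] at h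
  have h := h.resolve_left (pow_ne_zero _ (leadingCoeff_ne_zero.2 hP))
  exact exists_common_root_of_not_isCoprime (resultant_eq_zero_iff.1 h).2

/-- A root `ρ` of `D_g` yields a critical point of `g` with critical value `-ρ`. -/
theorem exists_critical_point {F : Type*} [Field F] {g : F[X]} (hg : g.Monic)
    (ρ : AlgebraicClosure F) (h : aeval ρ (Dpoly g) = 0) :
    ∃ c : AlgebraicClosure F, aeval c g + ρ = 0 ∧ aeval c (derivative g) = 0 := by
  by_cases h0 : g.natDegree = 0
  · exfalso
    rw [hg.natDegree_eq_zero] at h0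
    subst h0
    simp [Dpoly, pdisc, presultant_eq_resultant] at h
  set φ : F[X] →+* AlgebraicClosure F := (aeval ρ).toRingHom with hφ
  have hnat : (g.map C + C (X : F[X])).natDegree = g.natDegree := by
    rw [natDegree_add_C, natDegree_map_eq_of_injective C_injective]
  have hmap : (g.map C + C (X : F[X])).map φ
      = g.map (algebraMap F (AlgebraicClosure F)) + C ρ := by
    rw [Polynomial.map_add, Polynomial.map_map, map_C]
    congr 2
    · ext x; simp [hφ]
    · simp [hφ]
  have h1 : resultant (g.map (algebraMap F (AlgebraicClosure F)) + C ρ)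
      (derivative (g.map (algebraMap F (AlgebraicClosure F)) + C ρ)) g.natDegree
      (g.natDegree - 1) = 0 := by
    rw [← hmap, derivative_map, resultant_map_map]
    change φ _ = 0 at h
    rw [Dpoly, pdisc, presultant_eq_resultant, hnat, map_mul, mul_eq_zero] at h
    refine h.resolve_left ?_
    rw [map_pow]
    simp
  have hnat' : (g.map (algebraMap F (AlgebraicClosure F)) + C ρ).natDegree = g.natDegree := by
    rw [natDegree_add_C, natDegree_map]
  rw [← hnat'] at h1
  obtain ⟨c, hc, hc'⟩ := exists_common_root_of_resultant_eq_zero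
    (ne_zero_of_natDegree_gt (n := 0) (by omega)) (natDegree_derivative_le _) h1
  refine ⟨c, ?_, ?_⟩
  · simpa [eval_map_algebraMap] using hc
  · simpa [derivative_map, eval_map_algebraMap] using hc'

/-! ### Common critical values of a generic line -/

open KaehlerDifferential in
/-- The differential `ds` of the variable is nonzero in `Ω[E⁄F]` for `E` separable over `F(s)`: such
an `E` is formally étale over `F[s]`, so `Ω[E⁄F]` is the base change of `Ω[F[s]⁄F]`, which is free on
`ds`. -/
theorem D_X_ne_zero (F K E : Type*) [Field F] [Field K] [Field E]
    [Algebra F[X] K] [IsFractionRing F[X] K] [Algebra K E] [Algebra.IsSeparable K E]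
    [Algebra F[X] E] [IsScalarTower F[X] K E] [Algebra F E] [IsScalarTower F F[X] E] :
    D F E (algebraMap F[X] E X) ≠ 0 := by
  have : Algebra.FormallyEtale F[X] K :=
    Algebra.FormallyEtale.of_isLocalization (nonZeroDivisors F[X])
  have : Algebra.FormallyEtale K E := Algebra.FormallyEtale.of_isSeparable K E
  have : Algebra.FormallyEtale F[X] E := Algebra.FormallyEtale.comp F[X] K E
  intro h
  have h1 := tensorKaehlerEquivOfFormallyEtale_symm_D_algebraMap F F[X] E X
  rw [h, map_zero] at h1
  have h2 := congrArg ((polynomialEquiv F).toLinearMap.baseChange E) h1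
  rw [map_zero, LinearMap.baseChange_tmul] at h2
  have h3 := congrArg (TensorProduct.rid F[X] E) h2
  simp [polynomialEquiv_D] at h3

theorem isSeparable_of_simple_root {K L : Type*} [Field K] [Field L] [Algebra K L] {c : L}
    {Q : K[X]} (h0 : aeval c Q = 0) (h1 : aeval c (derivative Q) ≠ 0) : IsSeparable K c := by
  have hint : IsIntegral K c := by
    refine IsAlgebraic.isIntegral ⟨Q, ?_, h0⟩
    rintro rfl
    simp at h1
  refine (separable_iff_derivative_ne_zero (minpoly.irreducible hint)).2 fun hd => h1 ?_
  obtain ⟨h, hh⟩ := minpoly.dvd K c h0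
  rw [hh, derivative_mul, hd]
  simp

/-- If `c` were algebraic over `F`, so would be `s = -g'(c)`. Here `s` is the variable of `F[X]`. -/
theorem transcendental_of_critical_point {F L : Type*} [Field F] [Field L]
    [Algebra F[X] L] [FaithfulSMul F[X] L] [Algebra F L] [IsScalarTower F F[X] L]
    {g : F[X]} {c : L} (hc : aeval c (derivative g) + algebraMap F[X] L X = 0) :
    Transcendental F c := by
  intro halg
  have hX : Transcendental F (algebraMap F[X] L X) :=
    (transcendental_algebraMap_iff (FaithfulSMul.algebraMap_injective F[X] L)).2
      (transcendental_X F)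
  refine hX ?_
  rw [← neg_eq_of_add_eq_zero_right hc, isAlgebraic_iff_isIntegral]
  exact (adjoin_le_integralClosure halg.isIntegral (aeval_mem_adjoin_singleton F c)).neg

/-- Two polynomials `g₁ + s X` and `g₂ + s X` over `F(s)` with critical points in a separable
extension sharing a critical value are equal. Here `s` is the variable of `F[X]`, and
`g - X * derivative g` takes at a critical point the value of `g + s X` there. -/
theorem eq_of_common_critical_value_of_isSeparable {F K E : Type*}
    [Field F] [Field K] [Field E]
    [Algebra F[X] K] [IsFractionRing F[X] K] [Algebra K E] [Algebra.IsSeparable K E]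
    [Algebra F[X] E] [IsScalarTower F[X] K E] [Algebra F E] [IsScalarTower F F[X] E]
    {g₁ g₂ : F[X]} {c₁ c₂ : E} (hc₁ : aeval c₁ (derivative g₁) + algebraMap F[X] E X = 0)
    (hc₂ : aeval c₂ (derivative g₂) + algebraMap F[X] E X = 0)
    (hv : aeval c₁ (g₁ - X * derivative g₁) = aeval c₂ (g₂ - X * derivative g₂)) : g₁ = g₂ := by
  have : FaithfulSMul F[X] E := by
    rw [faithfulSMul_iff_algebraMap_injective, IsScalarTower.algebraMap_eq F[X] K E]
    exact (algebraMap K E).injective.comp (IsFractionRing.injective F[X] K)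
  set s : E := algebraMap F[X] E X with hs
  let d := KaehlerDifferential.D F E
  have hds : d s ≠ 0 := D_X_ne_zero F K E
  -- With `s = -g'(c)`, both sides equal `-c g''(c) dc`.
  have key : ∀ (g : F[X]) (c : E), aeval c (derivative g) + s = 0 →
      d (aeval c (g - X * derivative g)) = c • d s := by
    intro g c hc
    rw [← neg_eq_of_add_eq_zero_right hc, Derivation.map_neg, Derivation.map_aeval,
      Derivation.map_aeval, ← neg_smul, smul_smul]
    congr 1
    simp [derivative_mul]
  have hcc : c₁ = c₂ := by
    have h := key g₁ c₁ hc₁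
    rw [hv, key g₂ c₂ hc₂] at h
    exact (smul_left_injective E hds h).symm
  subst hcc
  by_contra hne
  refine transcendental_of_critical_point hc₁ ⟨g₁ - g₂, sub_ne_zero.2 hne, ?_⟩
  have hd : aeval c₁ (derivative g₁) = aeval c₁ (derivative g₂) :=
    add_right_cancel (hc₁.trans hc₂.symm)
  simp only [map_sub, map_mul, hd] at hv ⊢
  linear_combination hv

/-- A critical point `c` of `g + s X` is a simple root of `g' + s`, because `g''` cannot vanish at an
element transcendental over `F`. -/
theorem isSeparable_critical_point {F K L : Type*} [Field F] [Field K] [Field L]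
    [Algebra F[X] K] [Algebra K L] [Algebra F[X] L] [IsScalarTower F[X] K L]
    [Algebra F K] [IsScalarTower F F[X] K] [Algebra F L] [IsScalarTower F F[X] L]
    [IsScalarTower F K L] [FaithfulSMul F[X] L] {g : F[X]} (h : derivative (derivative g) ≠ 0)
    {c : L} (hc : aeval c (derivative g) + algebraMap F[X] L X = 0) : IsSeparable K c := by
  refine isSeparable_of_simple_root
    (Q := (derivative g).map (algebraMap F K) + C (algebraMap F[X] K X)) ?_ ?_
  · rw [map_add, aeval_map_algebraMap, aeval_C, ← IsScalarTower.algebraMap_apply, hc]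
  · rw [derivative_add, derivative_C, add_zero, derivative_map, aeval_map_algebraMap]
    exact fun h0 => transcendental_of_critical_point hc ⟨_, h, h0⟩

/-- The separability hypothesis of `eq_of_common_critical_value_of_isSeparable` can be traded for
`g₁'' ≠ 0` and `g₂'' ≠ 0`, which put both critical points in the separable closure of `F(s)`. -/
theorem eq_of_common_critical_value {F K L : Type*} [Field F] [Field K] [Field L]
    [Algebra F[X] K] [IsFractionRing F[X] K] [Algebra K L]
    [Algebra F[X] L] [IsScalarTower F[X] K L] [Algebra F K] [IsScalarTower F F[X] K]
    [Algebra F L] [IsScalarTower F F[X] L] [IsScalarTower F K L]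
    {g₁ g₂ : F[X]} (h₁ : derivative (derivative g₁) ≠ 0) (h₂ : derivative (derivative g₂) ≠ 0)
    {c₁ c₂ : L} (hc₁ : aeval c₁ (derivative g₁) + algebraMap F[X] L X = 0)
    (hc₂ : aeval c₂ (derivative g₂) + algebraMap F[X] L X = 0)
    (hv : aeval c₁ (g₁ - X * derivative g₁) = aeval c₂ (g₂ - X * derivative g₂)) : g₁ = g₂ := by
  have : FaithfulSMul F[X] L := by
    rw [faithfulSMul_iff_algebraMap_injective, IsScalarTower.algebraMap_eq F[X] K L]
    exact (algebraMap K L).injective.comp (IsFractionRing.injective F[X] K)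
  let E := separableClosure K L
  obtain ⟨e₁, rfl⟩ : ∃ e : E, algebraMap E L e = c₁ :=
    ⟨⟨c₁, mem_separableClosure_iff.2 (isSeparable_critical_point h₁ hc₁)⟩, rfl⟩
  obtain ⟨e₂, rfl⟩ : ∃ e : E, algebraMap E L e = c₂ :=
    ⟨⟨c₂, mem_separableClosure_iff.2 (isSeparable_critical_point h₂ hc₂)⟩, rfl⟩
  let : Algebra F[X] E := ((algebraMap K E).comp (algebraMap F[X] K)).toAlgebra
  let : Algebra F E := ((algebraMap K E).comp (algebraMap F K)).toAlgebra
  have : IsScalarTower F[X] K E := .of_algebraMap_eq fun _ => rfl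
  have : IsScalarTower F F[X] E := .of_algebraMap_eq fun x =>
    congrArg (algebraMap K E) (IsScalarTower.algebraMap_apply F F[X] K x)
  have : IsScalarTower F[X] E L :=
    .of_algebraMap_eq fun x => IsScalarTower.algebraMap_apply F[X] K L x
  have : IsScalarTower F E L :=
    .of_algebraMap_eq fun x => IsScalarTower.algebraMap_apply F K L x
  have hinj := (algebraMap E L).injective
  have hX : algebraMap F[X] L X = algebraMap E L (algebraMap F[X] E X) :=
    IsScalarTower.algebraMap_apply F[X] E L X
  rw [hX, aeval_algebraMap_apply, ← map_add, map_eq_zero_iff _ hinj] at hc₁ hc₂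
  rw [aeval_algebraMap_apply, aeval_algebraMap_apply] at hv
  exact eq_of_common_critical_value_of_isSeparable (K := K) hc₁ hc₂ (hinj hv)

/-! ### Degrees of slice discriminants -/

/-- `S` is only required to be multiplicative, as for an increasing filtration; the pieces need not
be independent. Column `j` of the matrix lies in `S (w j)`. -/
theorem det_mem_graded {R : Type*} [CommRing R] {N : ℕ} (S : ℕ → AddSubgroup R)
    [SetLike.GradedMonoid S] (M : Matrix (Fin N) (Fin N) R) (w : Fin N → ℕ)
    (h : ∀ i j, M i j ∈ S (w j)) : M.det ∈ S (∑ j, w j) := by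
  rw [Matrix.det_apply]
  refine sum_mem fun σ _ => ?_
  rw [Units.smul_def]
  exact zsmul_mem (SetLike.prod_mem_graded S w _ fun j _ => h _ _) _

/-- In the Sylvester matrix, `m` columns consist of coefficients of `g` and `n` columns of
coefficients of `f`. -/
theorem resultant_mem_graded {R : Type*} [CommRing R] (S : ℕ → AddSubgroup R)
    [SetLike.GradedMonoid S] {f g : R[X]} {m n u v : ℕ} (hf : ∀ k, f.coeff k ∈ S u)
    (hg : ∀ k, g.coeff k ∈ S v) : resultant f g m n ∈ S (m * v + n * u) := by
  have h := det_mem_graded S (sylvester f g m n) (Fin.addCases (fun _ => v) (fun _ => u))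
    fun i j => by
      induction j using Fin.addCases with
      | left j =>
        simp only [sylvester, Matrix.of_apply, Fin.addCases_left]
        split_ifs
        exacts [hg _, zero_mem _]
      | right j =>
        simp only [sylvester, Matrix.of_apply, Fin.addCases_right]
        split_ifs
        exacts [hf _, zero_mem _]
  simpa [resultant, Fin.sum_univ_add] using h

/-- Polynomials of degree at most `k`, as an increasing multiplicative filtration. -/
def degFiltration (R : Type*) [CommRing R] (k : ℕ) : AddSubgroup R[X] where
  carrier := {p | p.natDegree ≤ k}
  add_mem' ha hb := natDegree_add_le_of_degree_le ha hb
  zero_mem' := by simp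
  neg_mem' ha := by simpa using ha

theorem mem_degFiltration {R : Type*} [CommRing R] {k : ℕ} {p : R[X]} :
    p ∈ degFiltration R k ↔ p.natDegree ≤ k := Iff.rfl

instance (R : Type*) [CommRing R] : SetLike.GradedMonoid (degFiltration R) where
  one_mem := by simp [degFiltration]
  mul_mem _ _ _ _ ha hb := natDegree_mul_le_of_le ha hb

/-- Polynomials in two variables whose coefficients with respect to the outer variable have degree
at most `k` in the inner variable, as an increasing multiplicative filtration. -/
def coeffDegFiltration (R : Type*) [CommRing R] (k : ℕ) : AddSubgroup R[X][X] where
  carrier := {p | ∀ j, p.coeff j ∈ degFiltration R k}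
  add_mem' ha hb j := by rw [coeff_add]; exact add_mem (ha j) (hb j)
  zero_mem' j := by rw [coeff_zero]; exact zero_mem _
  neg_mem' ha j := by rw [coeff_neg]; exact neg_mem (ha j)

instance (R : Type*) [CommRing R] : SetLike.GradedMonoid (coeffDegFiltration R) where
  one_mem j := by
    rw [coeff_one]
    split_ifs
    exacts [SetLike.GradedOne.one_mem, zero_mem _]
  mul_mem a b p r ha hb j := by
    rw [coeff_mul]
    exact sum_mem fun x _ => SetLike.GradedMul.mul_mem (ha _) (hb _)

/-- The resultant in `x` of `g'(x) + s` and `g(x) - x g'(x) + t`. For `g'' ≠ 0` it vanishes exactly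
when `-t` is a critical value of `g(x) + s x`. It is encoded in `F[X][X]` with inner variable `s` and outer variable
`t`; `n` is the degree assigned to the second polynomial. -/
def sliceDisc {F : Type*} [Field F] (n : ℕ) (g : F[X]) : F[X][X] :=
  resultant ((derivative g).map (C.comp C) + C (C X)) ((g - X * derivative g).map (C.comp C) + C X)
    (derivative g).natDegree n

/-- The degree in `t`. -/
theorem natDegree_sliceDisc_le {F : Type*} [Field F] (n : ℕ) (g : F[X]) :
    (sliceDisc n g).natDegree ≤ (derivative g).natDegree := by
  have h := resultant_mem_graded (degFiltration F[X])
    (f := (derivative g).map (C.comp C) + C (C X))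
    (g := (g - X * derivative g).map (C.comp C) + C X) (m := (derivative g).natDegree) (n := n)
    (u := 0) (v := 1) (fun k => ?_) (fun k => ?_)
  · simpa [mem_degFiltration, sliceDisc] using h
  all_goals
    rw [coeff_add, coeff_map, coeff_C, RingHom.comp_apply]
    refine add_mem ?_ ?_
    · simp [mem_degFiltration]
    · split_ifs
      · simp [mem_degFiltration]
      · exact zero_mem _

/-- The degree in `s`. -/
theorem natDegree_coeff_sliceDisc_le {F : Type*} [Field F] (n : ℕ) (g : F[X]) (j : ℕ) :
    ((sliceDisc n g).coeff j).natDegree ≤ n := by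
  have h := resultant_mem_graded (coeffDegFiltration F)
    (f := (derivative g).map (C.comp C) + C (C X))
    (g := (g - X * derivative g).map (C.comp C) + C X) (m := (derivative g).natDegree) (n := n)
    (u := 1) (v := 0) (fun k => ?_) (fun k => ?_)
  · simpa [mem_degFiltration, sliceDisc] using h j
  all_goals
    rw [coeff_add, coeff_map, coeff_C, RingHom.comp_apply]
    refine add_mem (fun i => ?_) (fun i => ?_)
    · rw [coeff_C]
      split_ifs
      · simp [mem_degFiltration]
      · exact zero_mem _
    · split_ifs
      · simp only [coeff_C, coeff_X]
        split_ifs <;> simp [mem_degFiltration]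
      · exact zero_mem _

/-- The resultant in `t` of two slice discriminants, a polynomial in `s`. For `g₁'' ≠ 0` and
`g₂'' ≠ 0` it vanishes at those `s` for which `g₁ + s X` and `g₂ + s X` have a common critical value. -/
def sliceRes {F : Type*} [Field F] (n : ℕ) (g₁ g₂ : F[X]) : F[X] :=
  resultant (sliceDisc n g₁) (sliceDisc n g₂)

theorem natDegree_sliceRes_le {F : Type*} [Field F] {n : ℕ} {g₁ g₂ : F[X]}
    (h₁ : g₁.natDegree ≤ n) (h₂ : g₂.natDegree ≤ n) :
    (sliceRes n g₁ g₂).natDegree ≤ 2 * (n - 1) * n := by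
  have h := resultant_mem_graded (degFiltration F) (m := (sliceDisc n g₁).natDegree)
    (n := (sliceDisc n g₂).natDegree) (natDegree_coeff_sliceDisc_le n g₁)
    (natDegree_coeff_sliceDisc_le n g₂)
  have e : ∀ g : F[X], g.natDegree ≤ n → (sliceDisc n g).natDegree ≤ n - 1 := fun g hg =>
    (natDegree_sliceDisc_le n g).trans ((natDegree_derivative_le g).trans (by omega))
  refine (show (sliceRes n g₁ g₂).natDegree ≤ _ from h).trans ?_
  rw [← add_mul]
  exact Nat.mul_le_mul_right n (by have := e _ h₁; have := e _ h₂; omega)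

theorem map_sliceDisc {F K : Type*} [Field F] [Field K] [Algebra F K]
    (φ : F[X][X] →+* K) (hφ : φ.comp (C.comp C) = algebraMap F K) (n : ℕ) (g : F[X]) :
    φ (sliceDisc n g) = resultant ((derivative g).map (algebraMap F K) + C (φ (C X)))
      ((g - X * derivative g).map (algebraMap F K) + C (φ X)) (derivative g).natDegree n := by
  rw [sliceDisc, ← resultant_map_map]
  congr 1 <;> rw [Polynomial.map_add, Polynomial.map_map, hφ, map_C]

/-- A slice discriminant vanishes at the point `(φ (C X), φ X)` if and only if `-φ X` is a critical
value of `g + φ (C X) * X`. -/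
theorem map_sliceDisc_eq_zero_iff {F K : Type*} [Field F] [Field K] [Algebra F K] [IsAlgClosed K]
    (φ : F[X][X] →+* K) (hφ : φ.comp (C.comp C) = algebraMap F K) {n : ℕ} {g : F[X]}
    (hn : g.natDegree ≤ n) (hg : derivative (derivative g) ≠ 0) :
    φ (sliceDisc n g) = 0 ↔ ∃ c : K, aeval c (derivative g) + φ (C X) = 0 ∧
      aeval c (g - X * derivative g) + φ X = 0 := by
  have hpos : (derivative g).natDegree ≠ 0 := fun h => hg <| by
    rw [eq_C_of_natDegree_eq_zero h, derivative_C]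
  have hd1 : ((derivative g).map (algebraMap F K) + C (φ (C X))).natDegree
      = (derivative g).natDegree := by
    rw [natDegree_add_C, natDegree_map]
  have hd2 : ((g - X * derivative g).map (algebraMap F K) + C (φ X)).natDegree ≤ n := by
    rw [natDegree_add_C, natDegree_map]
    have h1 := natDegree_derivative_le g
    have h2 : (X * derivative g).natDegree ≤ n := by
      refine natDegree_mul_le.trans ?_
      rw [natDegree_X]
      omega
    exact (natDegree_sub_le _ _).trans (max_le hn h2)
  rw [map_sliceDisc φ hφ]
  constructor
  · intro h
    rw [← hd1] at h
    obtain ⟨c, hc, hc'⟩ := exists_common_root_of_resultant_eq_zero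
      (ne_zero_of_natDegree_gt (n := 0) (by omega)) hd2 h
    exact ⟨c, by simpa [eval_map_algebraMap] using hc, by simpa [eval_map_algebraMap] using hc'⟩
  · rintro ⟨c, hc, hc'⟩
    obtain ⟨p, q, -, -, h⟩ := exists_mul_add_mul_eq_C_resultant _ _ hd1.le hd2 (Or.inl hpos)
    have h := congrArg (eval c) h
    rw [eval_C, eval_add, eval_mul, eval_mul] at h
    rw [← h, eval_add, eval_add, eval_C, eval_C, eval_map_algebraMap, eval_map_algebraMap, hc, hc']
    ring

/-! ### The eliminant of a line -/

/-- An algebraic closure of the field `F(s)` of rational functions. -/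
abbrev GenericClosure (F : Type*) [Field F] : Type _ := AlgebraicClosure (FractionRing F[X])

theorem algebraMap_genericClosure_injective (F : Type*) [Field F] :
    Function.Injective (algebraMap F[X] (GenericClosure F)) := by
  rw [IsScalarTower.algebraMap_eq F[X] (FractionRing F[X]) (GenericClosure F)]
  exact (algebraMap (FractionRing F[X]) (GenericClosure F)).injective.comp
    (IsFractionRing.injective F[X] (FractionRing F[X]))

/-- On the generic line the two slice discriminants have no common root in `t`. -/
theorem not_common_zero_sliceDisc {F : Type*} [Field F] {n : ℕ} {g₁ g₂ : F[X]}
    (hn₁ : g₁.natDegree ≤ n) (hn₂ : g₂.natDegree ≤ n)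
    (h₁ : derivative (derivative g₁) ≠ 0) (h₂ : derivative (derivative g₂) ≠ 0) (hne : g₁ ≠ g₂)
    (τ : GenericClosure F) :
    ¬ ((sliceDisc n g₁).eval₂ (algebraMap F[X] (GenericClosure F)) τ = 0 ∧
      (sliceDisc n g₂).eval₂ (algebraMap F[X] (GenericClosure F)) τ = 0) := by
  rintro ⟨z₁, z₂⟩
  let φ : F[X][X] →+* GenericClosure F := eval₂RingHom (algebraMap F[X] (GenericClosure F)) τ
  have hφ : φ.comp (C.comp C) = algebraMap F (GenericClosure F) := by
    ext x
    simp [φ, IsScalarTower.algebraMap_apply F F[X] (GenericClosure F)]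
  have hX : φ X = τ := by simp [φ]
  have hs : φ (C X) = algebraMap F[X] (GenericClosure F) X := by simp [φ]
  obtain ⟨c₁, hc₁, hv₁⟩ := (map_sliceDisc_eq_zero_iff φ hφ hn₁ h₁).1 z₁
  obtain ⟨c₂, hc₂, hv₂⟩ := (map_sliceDisc_eq_zero_iff φ hφ hn₂ h₂).1 z₂
  rw [hs] at hc₁ hc₂
  exact hne (eq_of_common_critical_value (K := FractionRing F[X]) h₁ h₂ hc₁ hc₂
    (add_right_cancel (hv₁.trans hv₂.symm)))

/-- If the slice discriminant of `g` were constant in `t`, having a root it would vanish at every `t`,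
so `g` and `g + 1` would have a common critical value on the generic line. -/
theorem natDegree_sliceDisc_ne_zero {F : Type*} [Field F] {n : ℕ} {g : F[X]}
    (hn : g.natDegree ≤ n) (h : derivative (derivative g) ≠ 0) :
    (sliceDisc n g).natDegree ≠ 0 := by
  intro h0
  obtain ⟨d, hd⟩ := natDegree_eq_zero.1 h0
  have hpos : (derivative g).natDegree ≠ 0 := fun h' => h <| by
    rw [eq_C_of_natDegree_eq_zero h', derivative_C]
  obtain ⟨c, hc⟩ := IsAlgClosed.exists_root
    ((derivative g).map (algebraMap F (GenericClosure F)) + C (algebraMap F[X] (GenericClosure F) X)) (by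
      refine degree_ne_of_natDegree_ne ?_
      rw [natDegree_add_C, natDegree_map]
      exact hpos)
  rw [IsRoot.def, eval_add, eval_C, eval_map_algebraMap] at hc
  have key : ∀ g' : F[X], g'.natDegree ≤ n → derivative g' = derivative g →
      ∃ τ : GenericClosure F, (sliceDisc n g').eval₂ (algebraMap F[X] (GenericClosure F)) τ = 0 := by
    intro g' hn' hg'
    refine ⟨-aeval c (g' - X * derivative g'), ?_⟩
    refine (map_sliceDisc_eq_zero_iff (eval₂RingHom (algebraMap F[X] (GenericClosure F)) _) ?_ hn'
      (by rwa [hg'])).2 ⟨c, ?_, ?_⟩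
    · ext x
      simp [IsScalarTower.algebraMap_apply F F[X] (GenericClosure F)]
    · simpa [hg'] using hc
    · simp
  obtain ⟨τ, hτ⟩ := key g hn rfl
  obtain ⟨τ', hτ'⟩ := key (g + 1) (by rwa [← C_1, natDegree_add_C]) (by simp)
  refine not_common_zero_sliceDisc hn (by rwa [← C_1, natDegree_add_C]) h
    (by rwa [derivative_add, derivative_one, add_zero]) (by simp) τ' ⟨?_, hτ'⟩
  rw [← hd, eval₂_C] at hτ ⊢
  exact hτ

theorem sliceRes_ne_zero {F : Type*} [Field F] {n : ℕ} {g₁ g₂ : F[X]}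
    (hn₁ : g₁.natDegree ≤ n) (hn₂ : g₂.natDegree ≤ n)
    (h₁ : derivative (derivative g₁) ≠ 0) (h₂ : derivative (derivative g₂) ≠ 0) (hne : g₁ ≠ g₂) :
    sliceRes n g₁ g₂ ≠ 0 := by
  intro h
  have hinj := algebraMap_genericClosure_injective F
  have h' := congrArg (algebraMap F[X] (GenericClosure F)) h
  rw [map_zero, sliceRes, ← resultant_map_map, ← natDegree_map_eq_of_injective hinj,
    ← natDegree_map_eq_of_injective hinj (sliceDisc n g₂)] at h'
  obtain ⟨τ, t₁, t₂⟩ := exists_common_root_of_not_isCoprime (resultant_eq_zero_iff.1 h').2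
  rw [eval_map] at t₁ t₂
  exact not_common_zero_sliceDisc hn₁ hn₂ h₁ h₂ hne τ ⟨t₁, t₂⟩

/-- A common critical value `-τ` at the parameter `s` makes the eliminant vanish at `s`. -/
theorem sliceRes_eval_eq_zero {F K : Type*} [Field F] [Field K] [Algebra F K] [IsAlgClosed K]
    {n : ℕ} {g₁ g₂ : F[X]} (hn₁ : g₁.natDegree ≤ n) (hn₂ : g₂.natDegree ≤ n)
    (h₁ : derivative (derivative g₁) ≠ 0) (h₂ : derivative (derivative g₂) ≠ 0) {s : F}
    {c₁ c₂ τ : K} (hc₁ : aeval c₁ (derivative g₁) + algebraMap F K s = 0)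
    (hc₂ : aeval c₂ (derivative g₂) + algebraMap F K s = 0)
    (hv₁ : aeval c₁ (g₁ - X * derivative g₁) + τ = 0)
    (hv₂ : aeval c₂ (g₂ - X * derivative g₂) + τ = 0) : (sliceRes n g₁ g₂).eval s = 0 := by
  let ψ : F[X] →+* K := (algebraMap F K).comp (evalRingHom s)
  let φ : F[X][X] →+* K := eval₂RingHom ψ τ
  have hφ : φ.comp (C.comp C) = algebraMap F K := by
    ext x
    simp [φ, ψ]
  have hX : φ X = τ := by simp [φ]
  have hs : φ (C X) = algebraMap F K s := by simp [φ, ψ]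
  -- The degree in `t` of a slice discriminant may drop at this `s`, so the resultant is not
  -- specialized directly; it is a combination of the two slice discriminants.
  obtain ⟨p, q, -, -, h⟩ := exists_mul_add_mul_eq_C_resultant (sliceDisc n g₁) (sliceDisc n g₂)
    le_rfl le_rfl (Or.inl (natDegree_sliceDisc_ne_zero hn₁ h₁))
  have h := congrArg φ h
  rw [map_add, map_mul, map_mul,
    (map_sliceDisc_eq_zero_iff φ hφ hn₁ h₁).2 ⟨c₁, by rwa [hs], by rwa [hX]⟩,
    (map_sliceDisc_eq_zero_iff φ hφ hn₂ h₂).2 ⟨c₂, by rwa [hs], by rwa [hX]⟩] at h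
  have h3 : φ (C (sliceRes n g₁ g₂)) = algebraMap F K ((sliceRes n g₁ g₂).eval s) := by
    simp [φ, ψ]
  rw [sliceRes] at h3
  rw [h3, zero_mul, zero_mul, add_zero] at h
  exact (map_eq_zero _).1 h.symm

/-! ### Counting -/

/-- The first entry of `a` is the coefficient `a_1` of `X`. -/
theorem fPoly_cons {F : Type*} [Field F] (m : ℕ) (s : F) (b : Fin m → F) :
    fPoly (m + 2) (Fin.cons s b : Fin (m + 1) → F) =
      fPoly (m + 2) (Fin.cons 0 b : Fin (m + 1) → F) + C s * X := by
  have h : ∀ s : F, fPoly (m + 2) (Fin.cons s b : Fin (m + 1) → F)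
      = X ^ (m + 2) + (C s * X + ∑ i : Fin m, C (b i) * X ^ ((i : ℕ) + 1 + 1)) := by
    intro s
    rw [fPoly]
    congr 1
    refine (Fin.sum_univ_succ (n := m) _).trans ?_
    simp
  rw [h, h 0, C_0]
  ring

theorem degree_fPoly_tail_lt {F : Type*} [Field F] (m : ℕ) (a : Fin (m + 1) → F) {β : F[X]}
    (hβ : β.degree < (m + 2 : ℕ)) :
    (∑ i : Fin (m + 1), C (a i) * X ^ ((i : ℕ) + 1) + β).degree < (m + 2 : ℕ) := by
  refine (degree_add_le _ _).trans_lt (max_lt ?_ hβ)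
  refine (degree_sum_le _ _).trans_lt ((Finset.sup_lt_iff (WithBot.bot_lt_coe _)).2 fun i _ => ?_)
  refine (degree_C_mul_X_pow_le _ _).trans_lt ?_
  have := i.2
  exact_mod_cast (by omega : (i : ℕ) + 1 < m + 2)

theorem monic_fPoly_add {F : Type*} [Field F] (m : ℕ) (a : Fin (m + 1) → F) {β : F[X]}
    (hβ : β.degree < (m + 2 : ℕ)) : (fPoly (m + 2) a + β).Monic := by
  rw [fPoly, add_assoc]
  exact monic_X_pow_add (degree_fPoly_tail_lt m a hβ)

theorem natDegree_fPoly_add {F : Type*} [Field F] (m : ℕ) (a : Fin (m + 1) → F) {β : F[X]}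
    (hβ : β.degree < (m + 2 : ℕ)) : (fPoly (m + 2) a + β).natDegree = m + 2 := by
  rw [fPoly, add_assoc]
  refine natDegree_eq_of_degree_eq_some ?_
  rw [degree_add_eq_left_of_degree_lt, degree_X_pow]
  rw [degree_X_pow]
  exact degree_fPoly_tail_lt m a hβ

/-- The vanishing of the coefficient of `X ^ 2` prescribes `a_2`. For `m = 0` the polynomial is a
monic quadratic and the set is empty, which is why the bound is stated in multiplied form. -/
theorem card_degenerate_mul_le {F : Type*} [Field F] [Fintype F] (m : ℕ) {β : F[X]}
    (hβ : β.degree < (m + 2 : ℕ)) :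
    (Finset.univ.filter fun b : Fin m → F =>
      (fPoly (m + 2) (Fin.cons 0 b : Fin (m + 1) → F) + β).coeff 2 = 0).card * Fintype.card F ≤
      Fintype.card F ^ m := by
  cases m with
  | zero =>
    have : ∀ b : Fin 0 → F, (fPoly (0 + 2) (Fin.cons 0 b : Fin (0 + 1) → F) + β).coeff 2 = 1 := by
      intro b
      have h := (monic_fPoly_add 0 (Fin.cons 0 b) hβ).coeff_natDegree
      rwa [natDegree_fPoly_add 0 _ hβ] at h
    simp [this]
  | succ k =>
    have hc : ∀ b : Fin (k + 1) → F,
        (fPoly (k + 1 + 2) (Fin.cons 0 b : Fin (k + 1 + 1) → F) + β).coeff 2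
          = b 0 + β.coeff 2 := by
      intro b
      rw [coeff_add, fPoly, coeff_add, coeff_X_pow, if_neg (by omega), zero_add, finsetSum_coeff]
      congr 1
      refine (Finset.sum_eq_single (1 : Fin (k + 2)) (fun i _ hi => ?_) (by simp)).trans ?_
      · rw [coeff_C_mul_X_pow, if_neg]
        intro h
        exact hi (Fin.ext (by simp; omega))
      · simp
    simp only [hc]
    rw [pow_succ]
    refine Nat.mul_le_mul_right _ ?_
    have hcard : (Finset.univ : Finset (Fin k → F)).card = Fintype.card F ^ k := by
      simp
    rw [← hcard]
    refine Finset.card_le_card_of_injOn Fin.tail (by simp) ?_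
    intro b hb b' hb' h
    simp only [Finset.coe_filter, Finset.mem_univ, true_and, Set.mem_ofPred_eq] at hb hb'
    rw [← Fin.cons_self_tail b, ← Fin.cons_self_tail b', h,
      add_right_cancel (hb.trans hb'.symm)]

/-- Counting along the lines parallel to the first coordinate: at most `N` points on each line outside
`Z`, and trivially `Fintype.card F` points on each line in `Z`. -/
theorem card_le_of_slices {F : Type*} [Fintype F] {m N : ℕ} (P : (Fin (m + 1) → F) → Prop)
    (Z : Finset (Fin m → F))
    (h : ∀ b ∉ Z, (Finset.univ.filter fun s : F => P (Fin.cons s b)).card ≤ N) :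
    (Finset.univ.filter P).card ≤ N * Fintype.card F ^ m + Z.card * Fintype.card F := by
  rw [Finset.card_eq_sum_card_fiberwise (f := Fin.tail) (t := (Finset.univ : Finset (Fin m → F)))
    (by simp [Set.MapsTo])]
  have hfib : ∀ b : Fin m → F, (Finset.filter (fun a => Fin.tail a = b)
      (Finset.univ.filter P)).card ≤ N + if b ∈ Z then Fintype.card F else 0 := by
    intro b
    have h1 : (Finset.filter (fun a => Fin.tail a = b) (Finset.univ.filter P)).card ≤
        (Finset.univ.filter fun s : F => P (Fin.cons s b)).card := by
      refine Finset.card_le_card_of_injOn (fun a => a 0) ?_ ?_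
      · intro a ha
        simp only [Finset.coe_filter, Finset.mem_filter, Finset.mem_univ, true_and,
          Set.mem_ofPred_eq] at ha ⊢
        rw [← ha.2, Fin.cons_self_tail]
        exact ha.1
      · intro a ha a' ha' h0
        simp only [Finset.coe_filter, Finset.mem_filter, Finset.mem_univ, true_and,
          Set.mem_ofPred_eq] at ha ha'
        rw [← Fin.cons_self_tail a, ← Fin.cons_self_tail a', ha.2, ha'.2]
        exact congrArg (fun x => (Fin.cons x b : Fin (m + 1) → F)) h0
    refine h1.trans ?_
    split_ifs with hb
    · exact (Finset.card_le_univ _).trans (Nat.le_add_left _ _)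
    · exact h b hb
  refine (Finset.sum_le_sum fun b _ => hfib b).trans ?_
  rw [Finset.sum_add_distrib, Finset.sum_const, ← Finset.sum_filter, Finset.sum_const]
  simp [mul_comm]

theorem two_ne_zero_of_odd_card {F : Type*} [Field F] [Fintype F] (h : Odd (Fintype.card F)) :
    (2 : F) ≠ 0 := by
  refine Ring.two_ne_zero fun h2 => ?_
  rw [FiniteField.even_card_iff_char_two] at h2
  rw [Nat.odd_iff] at h
  omega

theorem derivative_derivative_ne_zero {F : Type*} [Field F] (h2 : (2 : F) ≠ 0) {g : F[X]}
    (hg : g.coeff 2 ≠ 0) : derivative (derivative g) ≠ 0 := by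
  intro h
  have := congrArg (fun p => coeff p 0) h
  simp only [coeff_derivative, coeff_zero] at this
  norm_num at this
  tauto

/-- The contribution of a single pair of shifts, with `n = m + 2`. -/
theorem card_common_critical_value_le {F : Type} [Field F] [Fintype F]
    (hq : Odd (Fintype.card F)) (m : ℕ) {β₁ β₂ : F[X]} (hne : β₁ ≠ β₂)
    (hβ₁ : β₁.degree < (m + 2 : ℕ)) (hβ₂ : β₂.degree < (m + 2 : ℕ)) :
    (Finset.univ.filter fun a : Fin (m + 1) → F => ∃ ρ : AlgebraicClosure F,
        aeval ρ (Dpoly (fPoly (m + 2) a + β₁)) = 0 ∧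
        aeval ρ (Dpoly (fPoly (m + 2) a + β₂)) = 0).card ≤
      3 * (m + 2) ^ 2 * Fintype.card F ^ m := by
  set q := Fintype.card F
  have h2 := two_ne_zero_of_odd_card hq
  let Zset : F[X] → Finset (Fin m → F) := fun β => Finset.univ.filter fun b : Fin m → F =>
      (fPoly (m + 2) (Fin.cons 0 b : Fin (m + 1) → F) + β).coeff 2 = 0
  have hZ : (Zset β₁ ∪ Zset β₂).card * q ≤ 2 * q ^ m := by
    have e₁ : (Zset β₁).card * q ≤ q ^ m := card_degenerate_mul_le m hβ₁
    have e₂ : (Zset β₂).card * q ≤ q ^ m := card_degenerate_mul_le m hβ₂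
    have e₃ := Nat.mul_le_mul_right q (Finset.card_union_le (Zset β₁) (Zset β₂))
    rw [add_mul] at e₃
    omega
  refine (card_le_of_slices (N := 2 * (m + 2 - 1) * (m + 2)) _ (Zset β₁ ∪ Zset β₂) ?_).trans
    ((Nat.add_le_add_left hZ _).trans ?_)
  · intro b hb
    simp only [Zset, Finset.mem_union, Finset.mem_filter, Finset.mem_univ, true_and,
      not_or] at hb
    set g₁ := fPoly (m + 2) (Fin.cons 0 b : Fin (m + 1) → F) + β₁ with hg₁
    set g₂ := fPoly (m + 2) (Fin.cons 0 b : Fin (m + 1) → F) + β₂ with hg₂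
    have hn₁ : g₁.natDegree ≤ m + 2 := (natDegree_fPoly_add m _ hβ₁).le
    have hn₂ : g₂.natDegree ≤ m + 2 := (natDegree_fPoly_add m _ hβ₂).le
    have d₁ := derivative_derivative_ne_zero h2 hb.1
    have d₂ := derivative_derivative_ne_zero h2 hb.2
    have hR := sliceRes_ne_zero hn₁ hn₂ d₁ d₂ fun h => hne (add_left_cancel h)
    refine le_trans ?_ ((card_roots' _).trans (natDegree_sliceRes_le hn₁ hn₂))
    refine le_trans (Finset.card_le_card fun s hs => ?_) (Multiset.toFinset_card_le _)
    simp only [Finset.mem_filter, Finset.mem_univ, true_and] at hs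
    obtain ⟨ρ, hρ₁, hρ₂⟩ := hs
    rw [Multiset.mem_toFinset, mem_roots hR]
    have crit : ∀ β : F[X], β.degree < (m + 2 : ℕ) →
        aeval ρ (Dpoly (fPoly (m + 2) (Fin.cons s b : Fin (m + 1) → F) + β)) = 0 →
        ∃ c : AlgebraicClosure F,
          aeval c (derivative (fPoly (m + 2) (Fin.cons 0 b : Fin (m + 1) → F) + β)) +
            algebraMap F _ s = 0 ∧
          aeval c ((fPoly (m + 2) (Fin.cons 0 b : Fin (m + 1) → F) + β) -
            X * derivative (fPoly (m + 2) (Fin.cons 0 b : Fin (m + 1) → F) + β)) + ρ = 0 := by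
      intro β hβ h
      obtain ⟨c, hc, hc'⟩ := exists_critical_point (monic_fPoly_add m _ hβ) ρ h
      rw [fPoly_cons, add_right_comm] at hc hc'
      simp only [map_add, map_sub, map_mul, derivative_C_mul, derivative_X,
        aeval_C, aeval_X, mul_one] at hc hc' ⊢
      exact ⟨c, hc', by linear_combination hc - c * hc'⟩
    obtain ⟨c₁, hc₁, hv₁⟩ := crit β₁ hβ₁ hρ₁
    obtain ⟨c₂, hc₂, hv₂⟩ := crit β₂ hβ₂ hρ₂
    exact sliceRes_eval_eq_zero hn₁ hn₂ d₁ d₂ hc₁ hc₂ hv₁ hv₂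
  · rw [← add_mul]
    refine Nat.mul_le_mul_right _ ?_
    rw [show m + 2 - 1 = m + 1 by omega]
    nlinarith

/-- The set `B` of coefficient vectors `a` for which `D_{f_a+α_i}(t)` and `D_{f_a+α_j}(t)`
have a common root in an algebraic closure for some `j ≠ i` has cardinality at most
`3 (r-1) n² q^{n-2}`. -/
theorem card_B_le (q n r : ℕ) (hq : Odd q) (hn : 1 < n) (hr : 1 < r)
    (F : Type) [Field F] [Fintype F] (hF : Fintype.card F = q)
    (α : Fin r → Polynomial F) (hα : Function.Injective α)
    (hdeg : ∀ j, (α j).degree < n) (i : Fin r) :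
    (Finset.univ.filter fun a : Fin (n - 1) → F =>
        ∃ j, j ≠ i ∧ ∃ ρ : AlgebraicClosure F,
          Polynomial.aeval ρ (Dpoly (fPoly n a + α i)) = 0 ∧
          Polynomial.aeval ρ (Dpoly (fPoly n a + α j)) = 0).card ≤
      3 * (r - 1) * n ^ 2 * q ^ (n - 2) := by
  subst hF
  obtain ⟨m, rfl⟩ := Nat.exists_eq_add_of_le' hn
  have key : ∀ j ∈ Finset.univ.erase i, _ := fun j hj =>
    card_common_critical_value_le hq m (hα.ne (Finset.ne_of_mem_erase hj).symm) (hdeg i) (hdeg j)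
  have h := Finset.card_biUnion_le_card_mul _ _ _ key
  rw [Finset.card_erase_of_mem (Finset.mem_univ i), Finset.card_univ, Fintype.card_fin] at h
  refine (Finset.card_le_card fun a ha => ?_).trans (h.trans (le_of_eq ?_))
  · simp only [Finset.mem_filter, Finset.mem_univ, true_and] at ha
    obtain ⟨j, hj, ρ, hρ⟩ := ha
    exact Finset.mem_biUnion.2 ⟨j, Finset.mem_erase.2 ⟨hj, Finset.mem_univ j⟩,
      Finset.mem_filter.2 ⟨Finset.mem_univ a, ρ, hρ⟩⟩
  · simp only [Nat.add_sub_cancel]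
    ring
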